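/- arXiv:2207.09170 — 3 statements merged into one kernel-verified Lean document; each statement's English description precedes it below -/
import Mathlib

section
/- Let r ≥ 1 and let A(r) := {s ∈ ℝ^r : s_1 + ... + s_r = 0, s_i ≤ s_{i+1} for 1 ≤ i < r, and s_r ≤ s_1 + 1}. Then the map ψ sending s = (s_1, ..., s_r) to the multiset {e^{2πi s_1}, ..., e^{2πi s_r}} of elements of Circle is a bijection from A(r) onto the set of multisets M of elements of Circle of cardinality r whose product equals 1. -/
/-!
Work with lifts of points of `AddCircle p` to an Archimedean ordered group; the theorem is the case
`p = 1` in `ℝ`.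

*Surjectivity.* Lift every point to `[0, p)`. The sum of the lifts differs from the prescribed one
by a multiple of `p`, and adding `p` to a smallest entry (or subtracting `p` from a largest one)
changes the sum by `p` while all entries stay within distance `p` of each other. Sort at the end.

*Injectivity.* The number `∑ ⌊(sᵢ - x) / p⌋` depends only on `∑ sᵢ`, on `x` and on the multiset of
residues, since the representatives of the residues in `[x, x + p)` have the same sum for every
lift. If `s` and `t` are points of the alcove with `t j < s j`, then at `x = s j` every term for `t`
is at most the corresponding term for `s`, strictly at `j`.
-/

open Finset Function

section ToIcoDiv

variable {G : Type*} [AddCommGroup G] [LinearOrder G] [IsOrderedAddMonoid G] [Archimedean G]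
  {p : G} (hp : 0 < p) {a b : G} {n : ℤ}

theorem le_toIcoDiv_iff : n ≤ toIcoDiv hp a b ↔ a + n • p ≤ b := by
  obtain ⟨h_left, h_right⟩ := sub_toIcoDiv_zsmul_mem_Ico hp a b
  refine ⟨fun h => ?_, fun h => ?_⟩
  · exact (add_le_add_right (zsmul_le_zsmul_left hp.le h) a).trans (le_sub_iff_add_le.1 h_left)
  · have : n • p < (toIcoDiv hp a b + 1) • p := by
      rw [add_one_zsmul]
      grind
    exact Int.lt_add_one_iff.1 ((zsmul_lt_zsmul_iff_left hp).1 this)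

theorem toIcoDiv_lt_iff : toIcoDiv hp a b < n ↔ b < a + n • p := by
  simpa only [not_le] using (le_toIcoDiv_iff hp).not

end ToIcoDiv

section Multiset

theorem map_univ_val_comp_equiv {ι κ α : Type*} [Fintype ι] [Fintype κ] (e : ι ≃ κ) (f : κ → α) :
    univ.val.map (f ∘ e) = univ.val.map f := by
  rw [← Multiset.map_map, Multiset.map_univ_val_equiv]

theorem exists_map_univ_val_eq {α : Type*} {r : ℕ} {M : Multiset α} (hM : M.card = r) :
    ∃ z : Fin r → α, univ.val.map z = M := by
  induction M using Quotient.inductionOn with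
  | _ l =>
    obtain rfl : l.length = r := hM
    exact ⟨l.get, by rw [Fin.univ_val_map, List.ofFn_get]; rfl⟩

theorem bijOn_multiset_map_card_sum {A M : Type*} [AddCommMonoid A] [CommMonoid M] {ψ : AddChar A M}
    (hψ : Bijective ψ) (r : ℕ) (a : A) :
    Set.BijOn (Multiset.map ψ) {S | S.card = r ∧ S.sum = a} {S | S.card = r ∧ S.prod = ψ a} := by
  have prod_map (S : Multiset A) : (S.map ψ).prod = ψ S.sum := by
    induction S using Multiset.induction with
    | empty => simp
    | cons x S ih => simp [AddChar.map_add_eq_mul, ih]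
  refine ⟨?_, (Multiset.map_injective hψ.injective).injOn, ?_⟩
  · rintro S ⟨h_card, rfl⟩
    exact ⟨by rw [Multiset.card_map, h_card], prod_map S⟩
  · rintro T ⟨h_card, h_prod⟩
    obtain ⟨S, rfl⟩ := Multiset.map_surjective_of_surjective hψ.surjective T
    rw [Multiset.card_map] at h_card
    exact ⟨S, ⟨h_card, hψ.injective ((prod_map S).symm.trans h_prod)⟩, rfl⟩

end Multiset

section Alcove

/-- The alcove of monotone families with sum `c` whose entries lie within `p` of each other; `A(r)`
is `alcove (Fin r) 1 0` in `ℝ`. The condition `s_r ≤ s_1 + p` is stated for all pairs of indices, so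
that it makes sense for an arbitrary finite index type; see `mem_alcove_fin_iff`. -/
def alcove {G : Type*} [AddCommMonoid G] [Preorder G] (ι : Type*) [Fintype ι] [Preorder ι]
    (p c : G) : Set (ι → G) :=
  {s | ∑ i, s i = c ∧ Monotone s ∧ ∀ i j, s i ≤ s j + p}

theorem mem_alcove_fin_iff {G : Type*} [AddCommMonoid G] [Preorder G] [IsOrderedAddMonoid G]
    {p c : G} {r : ℕ} (hr : 1 ≤ r) {s : Fin r → G} :
    s ∈ alcove (Fin r) p c ↔
      ∑ i, s i = c ∧
      (∀ (i : ℕ) (hi : i + 1 < r), s ⟨i, Nat.lt_of_succ_lt hi⟩ ≤ s ⟨i + 1, hi⟩) ∧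
      s ⟨r - 1, Nat.sub_one_lt_of_lt hr⟩ ≤ s ⟨0, hr⟩ + p := by
  obtain ⟨k, rfl⟩ := Nat.exists_eq_add_of_le' hr
  refine and_congr_right fun _ =>
    ⟨fun ⟨h_mono, h_spread⟩ => ⟨fun i hi => h_mono (by simp), h_spread _ _⟩,
      fun ⟨h_step, h_ends⟩ => ?_⟩
  have h_mono : Monotone s := Fin.monotone_iff_le_succ.2 fun i => h_step i (by omega)
  refine ⟨h_mono, fun i j => ?_⟩
  calc s i ≤ s (Fin.last k) := h_mono (Fin.le_last i)
    _ ≤ s 0 + p := h_ends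
    _ ≤ s j + p := add_le_add_left (h_mono (Fin.zero_le j)) p

variable {G : Type*} [AddCommGroup G] [LinearOrder G] [IsOrderedAddMonoid G] {p c : G}
  {ι : Type*} [Fintype ι]

theorem exists_sum_eq_add_period [Nonempty ι] {s : ι → G} (h_spread : ∀ i j, s i ≤ s j + p) :
    ∃ t : ι → G, (∀ i j, t i ≤ t j + p) ∧ ∑ i, t i = ∑ i, s i + p ∧
      ∀ i, (t i : AddCircle p) = s i := by
  classical
  obtain ⟨k, hk⟩ := Finite.exists_min s
  refine ⟨s + Pi.single k p, fun i j => ?_, by simp [sum_add_distrib], fun i => ?_⟩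
  · have h_period_nonneg := h_spread k k
    have h_spread_ij := h_spread i j
    grind [Pi.add_apply]
  · by_cases hik : i = k <;> simp [hik]

theorem exists_sum_eq_sub_period [Nonempty ι] {s : ι → G} (h_spread : ∀ i j, s i ≤ s j + p) :
    ∃ t : ι → G, (∀ i j, t i ≤ t j + p) ∧ ∑ i, t i = ∑ i, s i - p ∧
      ∀ i, (t i : AddCircle p) = s i := by
  classical
  obtain ⟨k, hk⟩ := Finite.exists_max s
  refine ⟨s - Pi.single k p, fun i j => ?_, by simp [sum_sub_distrib], fun i => ?_⟩
  · have h_period_nonneg := h_spread k k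
    have h_spread_ij := h_spread i j
    grind [Pi.sub_apply]
  · by_cases hik : i = k <;> simp [hik]

theorem exists_sum_eq_add_zsmul_period [Nonempty ι] {s : ι → G}
    (h_spread : ∀ i j, s i ≤ s j + p) (n : ℤ) :
    ∃ t : ι → G, (∀ i j, t i ≤ t j + p) ∧ ∑ i, t i = ∑ i, s i + n • p ∧
      ∀ i, (t i : AddCircle p) = s i := by
  induction n with
  | zero => exact ⟨s, h_spread, by simp, fun _ => rfl⟩
  | succ n ih =>
    obtain ⟨t, ht, h_sum, h_coe⟩ := ih
    obtain ⟨u, hu, hu_sum, hu_coe⟩ := exists_sum_eq_add_period ht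
    exact ⟨u, hu, by rw [hu_sum, h_sum, add_one_zsmul, add_assoc],
      fun i => (hu_coe i).trans (h_coe i)⟩
  | pred n ih =>
    obtain ⟨t, ht, h_sum, h_coe⟩ := ih
    obtain ⟨u, hu, hu_sum, hu_coe⟩ := exists_sum_eq_sub_period ht
    exact ⟨u, hu, by rw [hu_sum, h_sum, sub_one_zsmul, add_sub_assoc, sub_eq_add_neg (_ • p)],
      fun i => (hu_coe i).trans (h_coe i)⟩

variable [Archimedean G] [hp : Fact (0 < p)]

theorem sum_toIcoDiv_eq_of_map_coe_eq {s t : ι → G} (h_sum : ∑ i, s i = ∑ i, t i)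
    (h_map : univ.val.map (fun i => (s i : AddCircle p)) =
      univ.val.map (fun i => (t i : AddCircle p))) (x : G) :
    ∑ i, toIcoDiv hp.out x (s i) = ∑ i, toIcoDiv hp.out x (t i) := by
  have h_mod : ∑ i, toIcoMod hp.out x (s i) = ∑ i, toIcoMod hp.out x (t i) := by
    have h := congrArg (fun M => (M.map fun z => (AddCircle.equivIco p x z : G)).sum) h_map
    simp only [Multiset.map_map] at h
    exact h
  simp only [toIcoMod, sum_sub_distrib, h_sum, ← sum_smul, sub_right_inj] at h_mod
  exact (zsmul_left_strictMono hp.out).injective h_mod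

theorem le_of_sum_toIcoDiv_le [LinearOrder ι] {c' : G} {s t : ι → G}
    (hs : s ∈ alcove ι p c) (ht : t ∈ alcove ι p c')
    (h : ∀ x, ∑ i, toIcoDiv hp.out x (s i) ≤ ∑ i, toIcoDiv hp.out x (t i)) : s ≤ t := by
  obtain ⟨-, hs_mono, hs_spread⟩ := hs
  obtain ⟨-, ht_mono, ht_spread⟩ := ht
  intro j
  by_contra! hj
  refine (h (s j)).not_gt (sum_lt_sum (fun i _ => ?_) ⟨j, mem_univ j, ?_⟩)
  · rcases le_total i j with hij | hji
    · have ht_neg : toIcoDiv hp.out (s j) (t i) < 0 := by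
        rw [toIcoDiv_lt_iff]
        simpa using (ht_mono hij).trans_lt hj
      have hs_ge : -1 ≤ toIcoDiv hp.out (s j) (s i) := by
        rw [le_toIcoDiv_iff]
        simpa using hs_spread j i
      omega
    · have ht_lt : toIcoDiv hp.out (s j) (t i) < 1 := by
        rw [toIcoDiv_lt_iff]
        simpa using (ht_spread i j).trans_lt (add_lt_add_left hj p)
      have hs_nonneg : 0 ≤ toIcoDiv hp.out (s j) (s i) := by
        rw [le_toIcoDiv_iff]
        simpa using hs_mono hji
      omega
  · rw [toIcoDiv_apply_left, toIcoDiv_lt_iff]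
    simpa using hj

theorem injOn_map_coe_alcove [LinearOrder ι] :
    Set.InjOn (fun s : ι → G => univ.val.map fun i => (s i : AddCircle p)) (alcove ι p c) := by
  intro s hs t ht h_map
  have h_div := sum_toIcoDiv_eq_of_map_coe_eq (hs.1.trans ht.1.symm) h_map
  exact le_antisymm (le_of_sum_toIcoDiv_le hs ht fun x => (h_div x).le)
    (le_of_sum_toIcoDiv_le ht hs fun x => (h_div x).ge)

theorem exists_lift_sum_eq [Nonempty ι] (z : ι → AddCircle p) (hz : ∑ i, z i = c) :
    ∃ s : ι → G, (∀ i j, s i ≤ s j + p) ∧ ∑ i, s i = c ∧ ∀ i, (s i : AddCircle p) = z i := by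
  choose a ha_mem ha_coe using fun i => AddCircle.eq_coe_Ico (z i)
  have ha_spread (i j : ι) : a i ≤ a j + p :=
    (ha_mem i).2.le.trans (le_add_of_nonneg_left (ha_mem j).1)
  obtain ⟨n, hn⟩ : ∃ n : ℤ, n • p = c - ∑ i, a i := by
    rw [← AddCircle.coe_eq_zero_iff, AddCircle.coe_sub, QuotientAddGroup.mk_sum, sub_eq_zero, ← hz]
    simp only [ha_coe]
  obtain ⟨s, hs_spread, hs_sum, hs_coe⟩ := exists_sum_eq_add_zsmul_period ha_spread n
  exact ⟨s, hs_spread, by rw [hs_sum, hn, add_sub_cancel], fun i => (hs_coe i).trans (ha_coe i)⟩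

theorem surjOn_map_coe_alcove {r : ℕ} [NeZero r] :
    Set.SurjOn (fun s : Fin r → G => univ.val.map fun i => (s i : AddCircle p))
      (alcove (Fin r) p c) {M | M.card = r ∧ M.sum = c} := by
  rintro M ⟨h_card, h_sum⟩
  obtain ⟨z, rfl⟩ := exists_map_univ_val_eq h_card
  obtain ⟨s, hs_spread, hs_sum, hs_coe⟩ := exists_lift_sum_eq z h_sum
  refine ⟨s ∘ Tuple.sort s, ⟨?_, Tuple.monotone_sort s, fun i j => hs_spread _ _⟩, ?_⟩
  · exact (Equiv.sum_comp (Tuple.sort s) s).trans hs_sum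
  · simp only [comp_apply, hs_coe]
    exact map_univ_val_comp_equiv (Tuple.sort s) z

theorem bijOn_map_coe_alcove {r : ℕ} [NeZero r] :
    Set.BijOn (fun s : Fin r → G => univ.val.map fun i => (s i : AddCircle p))
      (alcove (Fin r) p c) {M | M.card = r ∧ M.sum = c} := by
  refine ⟨?_, injOn_map_coe_alcove, surjOn_map_coe_alcove⟩
  rintro s ⟨rfl, -⟩
  exact ⟨by simp, (QuotientAddGroup.mk_sum _ _).symm⟩

end Alcove

theorem toCircle_addChar_unitAddCircle_coe (x : ℝ) :
    AddCircle.toCircle_addChar (x : UnitAddCircle) = Circle.exp (2 * Real.pi * x) := by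
  rw [← div_one (2 * Real.pi)]
  exact AddCircle.toCircle_apply_mk x

theorem bijective_toCircle_addChar_unitAddCircle :
    Bijective (AddCircle.toCircle_addChar : AddChar UnitAddCircle Circle) := by
  convert (AddCircle.homeomorphCircle (one_ne_zero (α := ℝ))).bijective using 1
  ext1 x
  exact (AddCircle.homeomorphCircle_apply one_ne_zero x).symm

theorem stmt_3_general (r : ℕ) (hr : 1 ≤ r) (c : ℝ) :
    Set.BijOn (fun s : Fin r → ℝ => univ.val.map fun i => Circle.exp (2 * Real.pi * s i))
      (alcove (Fin r) 1 c)
      {M : Multiset Circle | M.card = r ∧ M.prod = Circle.exp (2 * Real.pi * c)} := by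
  have : NeZero r := ⟨by omega⟩
  have h_toCircle :=
    bijOn_multiset_map_card_sum bijective_toCircle_addChar_unitAddCircle r (c : UnitAddCircle)
  simpa only [comp_def, Multiset.map_map, toCircle_addChar_unitAddCircle_coe] using
    h_toCircle.comp bijOn_map_coe_alcove

/-- The map `s ↦ {e^{2πi s₁}, …, e^{2πi s_r}}` is a bijection from
`A(r) = {s ∈ ℝ^r : ∑ sᵢ = 0, sᵢ ≤ sᵢ₊₁, s_r ≤ s₁ + 1}` onto the set of multisets of
elements of `Circle` of cardinality `r` with product `1`. -/
theorem stmt_3 (r : ℕ) (hr : 1 ≤ r) :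
    Set.BijOn
      (fun s : Fin r → ℝ =>
        Multiset.map (fun i => Circle.exp (2 * Real.pi * s i)) Finset.univ.val)
      {s : Fin r → ℝ |
        (∑ i, s i) = 0 ∧
        (∀ (i : ℕ) (hi : i + 1 < r), s ⟨i, by omega⟩ ≤ s ⟨i + 1, hi⟩) ∧
        s ⟨r - 1, by omega⟩ ≤ s ⟨0, by omega⟩ + 1}
      {M : Multiset Circle | Multiset.card M = r ∧ M.prod = 1} := by
  simpa only [← mem_alcove_fin_iff hr, Set.ofPred_mem_eq, mul_zero, Circle.exp_zero] using
    stmt_3_general r hr 0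
end

section
/- Let m, n be coprime integers with m ≥ 2 and n ≥ 2. Let S be the set of pairs of integers (k, k') with 1 ≤ k < k' ≤ mn − 1 such that none of k, k', k' − k is divisible by m and none of k, k', k' − k is divisible by n. Then 2·|S| = (n − 1)(n − 2)(m − 1)(m − 2). -/
/-!
Order is irrelevant to the divisibility conditions: `m ∤ k' - k` says that `k` and `k'` differ
modulo `m`. Hence `2|S|` counts all ordered pairs in `[0, mn)²` whose entries are nonzero and
distinct both modulo `m` and modulo `n`. By the Chinese remainder theorem such a pair amounts to
a pair of distinct nonzero residues modulo `m` together with one modulo `n`, so there are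
`(m - 1)(m - 2) · (n - 1)(n - 2)` of them.
-/

open Finset

theorem two_mul_card_filter_fst_lt_snd {α : Type*} [LinearOrder α] {s : Finset (α × α)}
    (hswap : ∀ p ∈ s, p.swap ∈ s) (hne : ∀ p ∈ s, p.1 ≠ p.2) :
    2 * #{p ∈ s | p.1 < p.2} = #s := by
  have card_lt_eq_card_not_lt : #{p ∈ s | p.1 < p.2} = #{p ∈ s | ¬ p.1 < p.2} := by
    refine card_nbij' Prod.swap Prod.swap ?_ ?_ (fun p _ => p.swap_swap) (fun p _ => p.swap_swap)
    · intro p hp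
      obtain ⟨hps, hlt⟩ := mem_filter.mp hp
      exact mem_filter.mpr ⟨hswap p hps, hlt.not_gt⟩
    · intro p hp
      obtain ⟨hps, hnlt⟩ := mem_filter.mp hp
      exact mem_filter.mpr ⟨hswap p hps, (not_lt.mp hnlt).lt_of_ne' (hne p hps)⟩
  calc 2 * #{p ∈ s | p.1 < p.2}
      = #{p ∈ s | p.1 < p.2} + #{p ∈ s | ¬ p.1 < p.2} := by
        rw [two_mul, ← card_lt_eq_card_not_lt]
    _ = #s := card_filter_add_card_filter_not _

theorem card_offDiag_Ioo_zero (m : ℕ) : #(Ioo 0 m).offDiag = (m - 1) * (m - 2) := by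
  rw [offDiag_card, Nat.card_Ioo, Nat.sub_zero, ← Nat.mul_sub_one, Nat.sub_sub]

section ChineseRemainder

variable {m n : ℕ}

theorem exists_lt_mul_mod_eq_mod_eq (hco : m.Coprime n) {a b : ℕ} (ha : a < m) (hb : b < n) :
    ∃ x < m * n, x % m = a ∧ x % n = b := by
  obtain ⟨hxa, hxb⟩ := (Nat.chineseRemainder hco a b).2
  exact ⟨Nat.chineseRemainder hco a b,
    Nat.chineseRemainder_lt_mul hco a b (Nat.ne_zero_of_lt ha) (Nat.ne_zero_of_lt hb),
    Nat.mod_eq_of_modEq hxa ha, Nat.mod_eq_of_modEq hxb hb⟩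

theorem eq_of_lt_mul_of_mod_eq_of_mod_eq (hco : m.Coprime n) {x y : ℕ} (hx : x < m * n)
    (hy : y < m * n) (hm : x % m = y % m) (hn : x % n = y % n) : x = y :=
  ((Nat.modEq_and_modEq_iff_modEq_mul hco).mp ⟨hm, hn⟩).eq_of_lt_of_lt hx hy

theorem card_filter_mod_mem_and_mod_mem (hco : m.Coprime n) {A B : Finset (ℕ × ℕ)}
    (hA : A ⊆ range m ×ˢ range m) (hB : B ⊆ range n ×ˢ range n) :
    #{p ∈ range (m * n) ×ˢ range (m * n) |
        (p.1 % m, p.2 % m) ∈ A ∧ (p.1 % n, p.2 % n) ∈ B} = #A * #B := by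
  rw [← card_product]
  refine card_nbij (fun p => ((p.1 % m, p.2 % m), (p.1 % n, p.2 % n))) ?_ ?_ ?_
  · intro p hp
    exact mem_product.mpr (mem_filter.mp hp).2
  · rintro ⟨x, y⟩ hxy ⟨x', y'⟩ hxy' heq
    simp only [coe_filter, mem_product, mem_range, Set.mem_ofPred_eq] at hxy hxy'
    simp only [Prod.mk.injEq] at heq ⊢
    obtain ⟨⟨hxm, hym⟩, hxn, hyn⟩ := heq
    exact ⟨eq_of_lt_mul_of_mod_eq_of_mod_eq hco hxy.1.1 hxy'.1.1 hxm hxn,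
      eq_of_lt_mul_of_mod_eq_of_mod_eq hco hxy.1.2 hxy'.1.2 hym hyn⟩
  · rintro ⟨⟨a, a'⟩, ⟨b, b'⟩⟩ hab
    obtain ⟨ha_mem, hb_mem⟩ := mem_product.mp hab
    obtain ⟨ha, ha'⟩ := mem_product.mp (hA ha_mem)
    obtain ⟨hb, hb'⟩ := mem_product.mp (hB hb_mem)
    obtain ⟨x, hx, rfl, rfl⟩ :=
      exists_lt_mul_mod_eq_mod_eq hco (mem_range.mp ha) (mem_range.mp hb)
    obtain ⟨y, hy, rfl, rfl⟩ :=
      exists_lt_mul_mod_eq_mod_eq hco (mem_range.mp ha') (mem_range.mp hb')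
    exact ⟨(x, y), mem_filter.mpr
      ⟨mem_product.mpr ⟨mem_range.mpr hx, mem_range.mpr hy⟩, ha_mem, hb_mem⟩, rfl⟩

end ChineseRemainder

theorem mod_mem_Ioo_zero_iff {m a : ℕ} (hm : 0 < m) : a % m ∈ Ioo 0 m ↔ ¬ m ∣ a := by
  rw [mem_Ioo, and_iff_left (Nat.mod_lt a hm), Nat.pos_iff_ne_zero, Ne, Nat.dvd_iff_mod_eq_zero]

theorem mod_mem_offDiag_Ioo_zero_iff {m a b : ℕ} (hm : 0 < m) (hab : a ≤ b) :
    (a % m, b % m) ∈ (Ioo 0 m).offDiag ↔ ¬ m ∣ a ∧ ¬ m ∣ b ∧ ¬ m ∣ b - a := by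
  rw [mem_offDiag, mod_mem_Ioo_zero_iff hm, mod_mem_Ioo_zero_iff hm,
    ← Nat.modEq_iff_dvd' hab, Nat.ModEq]

/-- The ordered pairs in `[0, mn)²` whose entries are nonzero and distinct modulo `m`, and also
modulo `n`: the pairs of `S` together with their swaps. Being nonzero and distinct modulo `m` is
encoded as the pair of remainders lying off the diagonal of `(0, m)²`. -/
def distinctNonzeroResiduePairs (m n : ℕ) : Finset (ℕ × ℕ) :=
  {p ∈ range (m * n) ×ˢ range (m * n) |
    (p.1 % m, p.2 % m) ∈ (Ioo 0 m).offDiag ∧ (p.1 % n, p.2 % n) ∈ (Ioo 0 n).offDiag}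

namespace distinctNonzeroResiduePairs

variable {m n : ℕ}

theorem swap_mem {p : ℕ × ℕ} (hp : p ∈ distinctNonzeroResiduePairs m n) :
    p.swap ∈ distinctNonzeroResiduePairs m n := by
  simp only [distinctNonzeroResiduePairs, mem_filter, mem_product, mem_offDiag, Prod.fst_swap,
    Prod.snd_swap] at hp ⊢
  tauto

theorem fst_ne_snd {p : ℕ × ℕ} (hp : p ∈ distinctNonzeroResiduePairs m n) : p.1 ≠ p.2 := by
  have hmod : p.1 % m ≠ p.2 % m := (mem_offDiag.mp (mem_filter.mp hp).2.1).2.2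
  exact ne_of_apply_ne (· % m) hmod

theorem card_eq (hco : m.Coprime n) :
    #(distinctNonzeroResiduePairs m n) = (m - 1) * (m - 2) * ((n - 1) * (n - 2)) := by
  have offDiag_subset (k : ℕ) : (Ioo 0 k).offDiag ⊆ range k ×ˢ range k := by
    intro p hp
    obtain ⟨hfst, hsnd, -⟩ := mem_offDiag.mp hp
    exact mem_product.mpr ⟨mem_range.mpr (mem_Ioo.mp hfst).2, mem_range.mpr (mem_Ioo.mp hsnd).2⟩
  rw [distinctNonzeroResiduePairs,
    card_filter_mod_mem_and_mod_mem hco (offDiag_subset m) (offDiag_subset n),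
    card_offDiag_Ioo_zero, card_offDiag_Ioo_zero]

theorem filter_fst_lt_snd (hm : 0 < m) (hn : 0 < n) :
    {p ∈ distinctNonzeroResiduePairs m n | p.1 < p.2} =
      (Icc 1 (m * n - 1) ×ˢ Icc 1 (m * n - 1)).filter fun p =>
        p.1 < p.2 ∧
        ¬ m ∣ p.1 ∧ ¬ m ∣ p.2 ∧ ¬ m ∣ (p.2 - p.1) ∧
        ¬ n ∣ p.1 ∧ ¬ n ∣ p.2 ∧ ¬ n ∣ (p.2 - p.1) := by
  have mem_Icc_iff {a : ℕ} (ha : ¬ m ∣ a) : a ∈ Icc 1 (m * n - 1) ↔ a ∈ range (m * n) := by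
    have ha_pos : 0 < a := Nat.pos_of_ne_zero fun h => ha (h ▸ dvd_zero m)
    rw [mem_Icc, mem_range]
    lia
  ext ⟨a, b⟩
  by_cases hab : a < b
  · simp only [distinctNonzeroResiduePairs, mem_filter, mem_product,
      mod_mem_offDiag_Ioo_zero_iff hm hab.le, mod_mem_offDiag_Ioo_zero_iff hn hab.le]
    have ha := @mem_Icc_iff a
    have hb := @mem_Icc_iff b
    tauto
  · simp only [mem_filter, hab, false_and, and_false]

end distinctNonzeroResiduePairs

/-- For coprime `m, n ≥ 2`, let `S` be the set of pairs `1 ≤ k < k' ≤ mn - 1` such that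
none of `k, k', k' - k` is divisible by `m` and none is divisible by `n`. Then
`2|S| = (n-1)(n-2)(m-1)(m-2)`. -/
theorem stmt_14 (m n : ℕ) (hm : 2 ≤ m) (hn : 2 ≤ n) (hco : Nat.Coprime m n) :
    2 * ((Finset.Icc 1 (m * n - 1) ×ˢ Finset.Icc 1 (m * n - 1)).filter fun p =>
        p.1 < p.2 ∧
        ¬ m ∣ p.1 ∧ ¬ m ∣ p.2 ∧ ¬ m ∣ (p.2 - p.1) ∧
        ¬ n ∣ p.1 ∧ ¬ n ∣ p.2 ∧ ¬ n ∣ (p.2 - p.1)).card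
      = (n - 1) * (n - 2) * (m - 1) * (m - 2) := by
  rw [← distinctNonzeroResiduePairs.filter_fst_lt_snd (by lia) (by lia),
    two_mul_card_filter_fst_lt_snd (fun _ => distinctNonzeroResiduePairs.swap_mem)
      (fun _ => distinctNonzeroResiduePairs.fst_ne_snd),
    distinctNonzeroResiduePairs.card_eq hco]
  ring
end

section
/- Let m be an odd positive integer. For c ∈ ℤ/mℤ, let e_c : ℤ/mℤ → ℤ/2ℤ be the function with e_c(x) = 1 if x = c or x = −c, and e_c(x) = 0 otherwise. Then for every c ∈ ℤ/mℤ with c ≠ 0, the function e_c lies in the ℤ/2ℤ-linear span of the set of functions {e_a + e_b + e_{a−b} : a, b ∈ ℤ/mℤ, a ≠ 0, b ≠ 0, a ≠ b}. -/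
theorem even_of_odd_addOrderOf {G : Type*} [AddMonoid G] {c : G} (hc : Odd (addOrderOf c)) :
    Even c := by
  obtain ⟨k, hk⟩ := exists_nsmul_eq_self_of_coprime hc.coprime_two_left
  rw [← hk]
  exact (even_two.nsmul_left c).nsmul_right k

/-- The generator with `a = d + d` and `b = d` collapses to `e (d + d)`, because `a - b = d` and
the two copies of `e d` cancel. -/
theorem stmt_16_general {G M : Type*} [AddGroup G] [AddCommGroup M] [Module (ZMod 2) M]
    (e : G → M) {c : G} (hc : Even c) (hc₀ : c ≠ 0) :
    e c ∈ {f : M | ∃ a b : G, a ≠ 0 ∧ b ≠ 0 ∧ a ≠ b ∧ f = e a + e b + e (a - b)} := by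
  obtain ⟨d, rfl⟩ := hc
  have hd : d ≠ 0 := by
    rintro rfl
    exact hc₀ (add_zero 0)
  refine ⟨d + d, d, hc₀, hd, add_eq_left.not.mpr hd, ?_⟩
  rw [add_sub_cancel_right, add_assoc, ZModModule.add_self, add_zero]

/-- Let `m` be odd and, for `c : ZMod m`, let `e c : ZMod m → ZMod 2` be the indicator
of `{c, -c}`. Then for every `c ≠ 0`, the function `e c` lies in the `ZMod 2`-span of
the functions `e a + e b + e (a - b)` with `a, b ≠ 0`, `a ≠ b`. -/
theorem stmt_16 (m : ℕ) (hm : 0 < m) (hodd : Odd m)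
    (e : ZMod m → (ZMod m → ZMod 2))
    (he : ∀ c x : ZMod m, e c x = if x = c ∨ x = -c then 1 else 0) :
    ∀ c : ZMod m, c ≠ 0 →
      e c ∈ Submodule.span (ZMod 2)
        {f : ZMod m → ZMod 2 |
          ∃ a b : ZMod m, a ≠ 0 ∧ b ≠ 0 ∧ a ≠ b ∧ f = e a + e b + e (a - b)} := by
  intro c hc
  have horder : addOrderOf c ∣ m :=
    addOrderOf_dvd_of_nsmul_eq_zero (ZModModule.char_nsmul_eq_zero m c)
  exact Submodule.subset_span
    (stmt_16_general e (even_of_odd_addOrderOf (hodd.of_dvd_nat horder)) hc)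
end
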